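/- Let G be an abelian group of composite order having a cyclic Sylow subgroup, and let A be a primitive Schur ring over G (the only A-subgroups are 1 and G). Then A has rank 2, i.e., its basic sets are exactly {1} and G∖{1}. -/

import Mathlib

open scoped Pointwise

noncomputable def clsum {G : Type*} [Group G] [Fintype G] (s : Set G) :
    MonoidAlgebra ℤ G :=
  ∑ x ∈ s.toFinite.toFinset, MonoidAlgebra.of ℤ G x

structure SchurRing (G : Type*) [Group G] [Fintype G] where
  P : Set (Set G)
  one_mem : ({(1 : G)} : Set G) ∈ P
  nonempty_cls : ∀ X ∈ P, X.Nonempty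
  cover : ∀ g : G, ∃ X ∈ P, g ∈ X
  disj : ∀ X ∈ P, ∀ Y ∈ P, X ≠ Y → Disjoint X Y
  inv_mem : ∀ X ∈ P, X⁻¹ ∈ P
  mul_closed : ∀ X ∈ P, ∀ Y ∈ P,
    clsum X * clsum Y ∈ Submodule.span ℤ (clsum '' P)

def SchurRing.isASet {G : Type*} [Group G] [Fintype G] (A : SchurRing G) (X : Set G) : Prop :=
  clsum X ∈ Submodule.span ℤ (clsum '' A.P)

/-!
Call a set `X` an `A`-set if its class sum lies in `A`. Since `A` is the algebra of all elements
of the group ring that are constant on every basic set, each set `{g | f g = c}` with `f ∈ A` is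
an `A`-set (the Schur–Wielandt principle). The proof rests on three facts.

* The coefficient of `clsum X * clsum X⁻¹` at `g` is `|X ∩ gX|`, so the stabilizer of an `A`-set
  is an `A`-subgroup.
* Modulo `p`, the `p`-th power of `clsum X` is the sum of the `x ^ p` with `x ∈ X`, so the `g`
  having a number of `p`-th roots in `X` prime to `p` form an `A`-set. It lies in the proper
  subgroup of `p`-th powers, so by primitivity it is contained in `{1}`.
* Cyclicity of the Sylow `p`-subgroup says that the kernel `N` of `x ↦ x ^ p` has order `p`.
  Hence, if `x ∈ X \ N`, then the number of `p`-th roots of `x ^ p` in `X` is positive and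
  divisible by `p`, so that `xN ⊆ X`.

A basic set missing `N` would thus be stabilized by `N`; as stabilizers are trivial, every basic
set meets `N`, and `|X ∩ gX| ≥ |X \ N|` for every `g`. Summing over `g` gives
`|X|² ≥ |X| + (|G| - 1) |X \ N|`. If `1 ∉ X` then `|X ∩ N| < |N| ≤ |X \ N|`, and the two
inequalities force `|X| > |G| / 2`. There is no room for two such sets.
-/

section GroupTheory

variable {G : Type*}

theorem mem_closure_iff_exists_mem_pow [Group G] [Finite G] {s : Set G} {g : G} :
    g ∈ Subgroup.closure s ↔ ∃ n : ℕ, g ∈ s ^ n := by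
  constructor
  · intro hg
    rw [← Subgroup.mem_toSubmonoid, Subgroup.closure_toSubmonoid_of_finite] at hg
    induction hg using Submonoid.closure_induction with
    | mem x hx => exact ⟨1, by simpa using hx⟩
    | one => exact ⟨0, by simp⟩
    | mul x y _ _ hx hy =>
      obtain ⟨m, hm⟩ := hx
      obtain ⟨n, hn⟩ := hy
      exact ⟨m + n, pow_add s m n ▸ Set.mul_mem_mul hm hn⟩
  · rintro ⟨n, hn⟩
    exact Subgroup.pow_subset Subgroup.subset_closure hn

theorem sum_ncard_inter_smul [Group G] [Fintype G] (s t : Set G) :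
    ∑ g : G, (s ∩ g • t).ncard = s.ncard * t.ncard := by
  classical
  lift s to Finset G using s.toFinite
  lift t to Finset G using t.toFinite
  have card_inter (g : G) : ((s : Set G) ∩ g • (t : Set G)).ncard = s.convolution t⁻¹ g := by
    rw [← Finset.card_inter_smul, ← Set.ncard_coe_finset, Finset.coe_inter,
      Finset.coe_smul_finset]
  calc ∑ g : G, ((s : Set G) ∩ g • (t : Set G)).ncard
      = ∑ g : G, s.convolution t⁻¹ g := Finset.sum_congr rfl fun g _ => card_inter g
    _ = (s ×ˢ t⁻¹).card := (Finset.card_eq_sum_card_fiberwise (by simp)).symm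
    _ = (s : Set G).ncard * (t : Set G).ncard := by
      rw [Finset.card_product, Finset.card_inv, Set.ncard_coe_finset, Set.ncard_coe_finset]

theorem card_ker_powMonoidHom_of_isCyclic_sylow [CommGroup G] [Finite G] {p : ℕ}
    [Fact p.Prime] (hdvd : p ∣ Nat.card G) (P : Sylow p G) [IsCyclic P] :
    Nat.card (powMonoidHom p : G →* G).ker = p := by
  have ker_le : (powMonoidHom p : G →* G).ker ≤ P := by
    have ker_isPGroup : IsPGroup p (powMonoidHom p : G →* G).ker := fun x =>
      ⟨1, Subtype.ext ((congrArg (x.1 ^ ·) (pow_one p)).trans (MonoidHom.mem_ker.1 x.2))⟩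
    obtain ⟨Q, hQ⟩ := ker_isPGroup.exists_le_sylow
    have := P.unique_of_normal inferInstance
    exact Subsingleton.elim Q P ▸ hQ
  have ker_eq_map : (powMonoidHom p : G →* G).ker =
      (powMonoidHom p : P →* P).ker.map (P : Subgroup G).subtype := by
    ext x
    constructor
    · exact fun hx => ⟨⟨x, ker_le hx⟩, Subtype.ext hx, rfl⟩
    · rintro ⟨y, hy, rfl⟩
      exact congrArg Subtype.val hy
  rw [ker_eq_map, Subgroup.card_map_of_injective (P : Subgroup G).subtype_injective,
    IsCyclic.card_powMonoidHom_ker, Nat.gcd_eq_right (P.dvd_card_of_dvd_card hdvd)]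

theorem ker_powMonoidHom_ne_bot [CommGroup G] {p : ℕ} [hp : Fact p.Prime]
    (hN : Nat.card (powMonoidHom p : G →* G).ker = p) : (powMonoidHom p : G →* G).ker ≠ ⊥ :=
  fun h => hp.out.ne_one (hN.symm.trans (Subgroup.card_eq_one.2 h))

theorem range_powMonoidHom_ne_top [CommGroup G] [Finite G] {n : ℕ}
    (h : (powMonoidHom n : G →* G).ker ≠ ⊥) : (powMonoidHom n : G →* G).range ≠ ⊤ := by
  rwa [Ne, MonoidHom.range_eq_top, ← Finite.injective_iff_surjective, ← MonoidHom.ker_eq_bot_iff]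

theorem ncard_setOf_pow_eq_pow [CommGroup G] (n : ℕ) (x : G) :
    {y : G | y ^ n = x ^ n}.ncard = Nat.card (powMonoidHom n : G →* G).ker := by
  have : {y : G | y ^ n = x ^ n} = x • ((powMonoidHom n : G →* G).ker : Set G) := by
    ext y
    simp [Set.mem_smul_set_iff_inv_smul_mem, mul_pow, inv_mul_eq_one, eq_comm]
  rw [this, Set.ncard_smul_set]
  rfl

end GroupTheory

section ClassSum

variable {G : Type*} [Fintype G]

theorem clsum_singleton [Group G] (g : G) : clsum {g} = MonoidAlgebra.of ℤ G g := by
  simp [clsum]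

open Classical in
theorem coeff_clsum [Group G] (s : Set G) (g : G) :
    (clsum s).coeff g = if g ∈ s then 1 else 0 := by
  simp [clsum, MonoidAlgebra.coeff_sum, Finsupp.finsetSum_apply, Finsupp.single_apply]

theorem coeff_clsum_mul_clsum [Group G] (s t : Set G) (g : G) :
    (clsum s * clsum t).coeff g = (s ∩ g • t⁻¹).ncard := by
  classical
  have : clsum s * clsum t = ∑ x ∈ s.toFinite.toFinset, MonoidAlgebra.single x 1 * clsum t :=
    Finset.sum_mul ..
  rw [this, MonoidAlgebra.coeff_sum, Finsupp.finsetSum_apply]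
  simp only [MonoidAlgebra.coeff_single_mul_apply, coeff_clsum, one_mul, Finset.sum_boole]
  rw [← Set.ncard_coe_finset]
  congr 2
  ext x
  simp [Set.mem_smul_set_iff_inv_smul_mem]

theorem coeff_clsum_pow_prime [CommGroup G] (p : ℕ) [Fact p.Prime] (s : Set G) (g : G) :
    ((clsum s ^ p).coeff g : ZMod p) = ({x ∈ s | x ^ p = g}.ncard : ZMod p) := by
  classical
  have : CharP (MonoidAlgebra (ZMod p) G) p :=
    charP_of_injective_algebraMap (algebraMap (ZMod p) (MonoidAlgebra (ZMod p) G)).injective p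
  have frobenius : MonoidAlgebra.mapRingHom G (Int.castRingHom (ZMod p)) (clsum s ^ p) =
      ∑ x ∈ s.toFinite.toFinset, MonoidAlgebra.single (x ^ p) 1 := by
    rw [map_pow, clsum, map_sum, sum_pow_char]
    simp [MonoidAlgebra.single_pow]
  calc ((clsum s ^ p).coeff g : ZMod p)
      = (MonoidAlgebra.mapRingHom G (Int.castRingHom (ZMod p)) (clsum s ^ p)).coeff g :=
        (MonoidAlgebra.coeff_mapRingHom (Int.castRingHom (ZMod p)) (clsum s ^ p) g).symm
    _ = ({x ∈ s | x ^ p = g}.ncard : ZMod p) := by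
      rw [frobenius, MonoidAlgebra.coeff_sum, Finsupp.finsetSum_apply]
      simp only [MonoidAlgebra.coeff_single, Finsupp.single_apply, Finset.sum_boole]
      rw [← Set.ncard_coe_finset]
      congr 2
      ext x
      simp

end ClassSum

namespace SchurRing

section Group

variable {G : Type*} [Group G] [Fintype G] {A : SchurRing G} {U V X Y : Set G}

theorem eq_of_mem_of_mem (hX : X ∈ A.P) (hY : Y ∈ A.P) {g : G} (hgX : g ∈ X) (hgY : g ∈ Y) :
    X = Y := by
  by_contra hne
  exact Set.disjoint_left.1 (A.disj X hX Y hY hne) hgX hgY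

theorem eq_singleton_one_of_one_mem (hX : X ∈ A.P) (h1 : 1 ∈ X) : X = {1} :=
  eq_of_mem_of_mem hX A.one_mem h1 rfl

variable (A) in
/-- A Schur ring as a subalgebra of the integral group ring; `A.isASet U` means that it contains
`clsum U`. -/
noncomputable def toSubalgebra : Subalgebra ℤ (MonoidAlgebra ℤ G) :=
  (Submodule.span ℤ (clsum '' A.P)).toSubalgebra
    (Submodule.subset_span ⟨{1}, A.one_mem, (clsum_singleton 1).trans (map_one _)⟩)
    (fun f g hf hg => by
      have hfg := Submodule.mul_mem_mul hf hg
      rw [Submodule.span_mul_span] at hfg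
      refine Submodule.span_le.2 ?_ hfg
      rintro _ ⟨_, ⟨X, hX, rfl⟩, _, ⟨Y, hY, rfl⟩, rfl⟩
      exact A.mul_closed X hX Y hY)

theorem mem_toSubalgebra_iff {f : MonoidAlgebra ℤ G} :
    f ∈ A.toSubalgebra ↔ ∀ X ∈ A.P, ∀ x ∈ X, ∀ y ∈ X, f.coeff x = f.coeff y := by
  classical
  constructor
  · intro hf X hX x hx y hy
    induction hf using Submodule.span_induction with
    | mem f hf =>
      obtain ⟨Y, hY, rfl⟩ := hf
      have : x ∈ Y ↔ y ∈ Y :=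
        ⟨fun h => eq_of_mem_of_mem hX hY hx h ▸ hy, fun h => eq_of_mem_of_mem hX hY hy h ▸ hx⟩
      simp only [coeff_clsum, this]
    | zero => simp
    | add a b _ _ ha hb => simp [ha, hb]
    | smul c a _ ha => rw [MonoidAlgebra.coeff_smul_apply, ha, MonoidAlgebra.coeff_smul_apply]
  · intro hf
    have sum_eq : f = ∑ X : A.P, f.coeff (A.nonempty_cls X X.2).some • clsum (X : Set G) := by
      ext g
      obtain ⟨X, hX, hg⟩ := A.cover g
      rw [MonoidAlgebra.coeff_sum, Finsupp.finsetSum_apply, Finset.sum_eq_single ⟨X, hX⟩]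
      · rw [MonoidAlgebra.coeff_smul_apply, coeff_clsum, if_pos hg, smul_eq_mul, mul_one]
        exact hf X hX g hg _ (A.nonempty_cls X hX).some_mem
      · rintro ⟨Y, hY⟩ - hne
        have hgY : g ∉ Y := fun h => hne (Subtype.ext (eq_of_mem_of_mem hY hX h hg))
        rw [MonoidAlgebra.coeff_smul_apply, coeff_clsum, if_neg hgY, smul_zero]
      · simp
    rw [sum_eq]
    exact sum_mem fun X _ => A.toSubalgebra.smul_mem (Submodule.subset_span ⟨X, X.2, rfl⟩) _

theorem isASet_iff : A.isASet U ↔ ∀ X ∈ A.P, ∀ x ∈ X, ∀ y ∈ X, x ∈ U → y ∈ U := by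
  classical
  refine mem_toSubalgebra_iff.trans ⟨fun h X hX x hx y hy hxU => ?_, fun h X hX x hx y hy => ?_⟩
  · by_contra hyU
    simpa [coeff_clsum, hxU, hyU] using h X hX x hx y hy
  · have : x ∈ U ↔ y ∈ U := ⟨h X hX x hx y hy, h X hX y hy x hx⟩
    simp only [coeff_clsum, this]

theorem isASet_setOf_coeff {f : MonoidAlgebra ℤ G} (hf : f ∈ A.toSubalgebra) (q : ℤ → Prop) :
    A.isASet {g | q (f.coeff g)} :=
  isASet_iff.2 fun X hX x hx y hy (hq : q (f.coeff x)) =>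
    (mem_toSubalgebra_iff.1 hf X hX x hx y hy ▸ hq : q (f.coeff y))

theorem isASet_of_mem (hX : X ∈ A.P) : A.isASet X :=
  Submodule.subset_span ⟨X, hX, rfl⟩

theorem isASet.inv (hU : A.isASet U) : A.isASet U⁻¹ :=
  isASet_iff.2 fun X hX x hx y hy hxU =>
    isASet_iff.1 hU X⁻¹ (A.inv_mem X hX) x⁻¹ (by simpa) y⁻¹ (by simpa) hxU

theorem isASet.mul (hU : A.isASet U) (hV : A.isASet V) : A.isASet (U * V) := by
  have : U * V = {g | (clsum U * clsum V).coeff g ≠ 0} := by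
    ext g
    rw [Set.mem_ofPred_eq, coeff_clsum_mul_clsum, Nat.cast_ne_zero,
      ← Nat.pos_iff_ne_zero, Set.ncard_pos]
    constructor
    · rintro ⟨x, hx, y, hy, rfl⟩
      exact ⟨x, hx, Set.mem_smul_set_iff_inv_smul_mem.2 (by simpa)⟩
    · rintro ⟨x, hx, hxg⟩
      exact ⟨x, hx, x⁻¹ * g, by simpa [Set.mem_smul_set_iff_inv_smul_mem] using hxg, by simp⟩
  rw [this]
  exact isASet_setOf_coeff (A.toSubalgebra.mul_mem hU hV) (· ≠ 0)

theorem isASet.pow (hU : A.isASet U) (n : ℕ) : A.isASet (U ^ n) := by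
  induction n with
  | zero => exact pow_zero U ▸ isASet_of_mem A.one_mem
  | succ n ih => exact pow_succ U n ▸ ih.mul hU

theorem isASet.closure (hU : A.isASet U) : A.isASet (Subgroup.closure U : Set G) := by
  refine isASet_iff.2 fun X hX x hx y hy hxU => ?_
  obtain ⟨n, hxn⟩ := mem_closure_iff_exists_mem_pow.1 hxU
  exact mem_closure_iff_exists_mem_pow.2 ⟨n, isASet_iff.1 (hU.pow n) X hX x hx y hy hxn⟩

theorem isASet.ncard_inter_smul_eq (hU : A.isASet U) (hX : X ∈ A.P) {g h : G} (hg : g ∈ X)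
    (hh : h ∈ X) : (U ∩ g • U).ncard = (U ∩ h • U).ncard := by
  have := mem_toSubalgebra_iff.1 (A.toSubalgebra.mul_mem hU hU.inv) X hX g hg h hh
  simpa [coeff_clsum_mul_clsum] using this

theorem isASet.stabilizer (hU : A.isASet U) :
    A.isASet (MulAction.stabilizer G U : Set G) := by
  have : (MulAction.stabilizer G U : Set G) =
      {g | (clsum U * clsum U⁻¹).coeff g = U.ncard} := by
    ext g
    rw [SetLike.mem_coe, MulAction.mem_stabilizer_set_iff_subset_smul_set U.toFinite,
      Set.mem_ofPred_eq, coeff_clsum_mul_clsum, inv_inv, Nat.cast_inj, ← Set.inter_eq_left]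
    exact ⟨fun h => by rw [h], fun h => Set.eq_of_subset_of_ncard_le Set.inter_subset_left h.ge⟩
  rw [this]
  exact isASet_setOf_coeff (A.toSubalgebra.mul_mem hU hU.inv) (· = U.ncard)

variable (A) in
/-- A Schur ring over `G` is primitive if its only `A`-subgroups are the trivial subgroup and
`G`. -/
def IsPrimitive : Prop :=
  ∀ L : Subgroup G, A.isASet (L : Set G) → L = ⊥ ∨ L = ⊤

theorem IsPrimitive.subset_singleton_one (hA : A.IsPrimitive) (hU : A.isASet U) {H : Subgroup G}
    (hH : H ≠ ⊤) (hUH : U ⊆ H) : U ⊆ {1} := by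
  have closure_le : Subgroup.closure U ≤ H := (Subgroup.closure_le H).2 hUH
  have closure_eq_bot : Subgroup.closure U = ⊥ :=
    (hA _ hU.closure).resolve_right fun h => hH (top_le_iff.1 (h ▸ closure_le))
  exact Subgroup.closure_eq_bot_iff.1 closure_eq_bot

theorem IsPrimitive.stabilizer_eq_bot (hA : A.IsPrimitive) (hU : A.isASet U) (hne : U.Nonempty)
    (huniv : U ≠ Set.univ) : MulAction.stabilizer G U = ⊥ := by
  refine (hA _ hU.stabilizer).resolve_right fun htop => huniv ?_
  obtain ⟨x, hx⟩ := hne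
  refine Set.eq_univ_of_forall fun g => ?_
  have : g * x⁻¹ ∈ MulAction.stabilizer G U := htop ▸ Subgroup.mem_top _
  simpa using (MulAction.mem_stabilizer_set.1 this x).2 hx

theorem P_eq_pair [Nontrivial G]
    (h : ∀ X ∈ A.P, ∀ Y ∈ A.P, 1 ∉ X → 1 ∉ Y → X = Y) : A.P = {{1}, {1}ᶜ} := by
  have eq_compl : ∀ X ∈ A.P, 1 ∉ X → X = {1}ᶜ := by
    intro X hX h1X
    refine Set.Subset.antisymm (Set.subset_compl_singleton_iff.2 h1X) fun g hg => ?_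
    obtain ⟨Y, hY, hgY⟩ := A.cover g
    have h1Y : 1 ∉ Y := fun h1 => hg ((eq_singleton_one_of_one_mem hY h1).subset hgY)
    exact h X hX Y hY h1X h1Y ▸ hgY
  refine Set.Subset.antisymm (fun X hX => ?_) (Set.pair_subset A.one_mem ?_)
  · by_cases h1X : 1 ∈ X
    · exact Or.inl (eq_singleton_one_of_one_mem hX h1X)
    · exact Or.inr (eq_compl X hX h1X)
  · obtain ⟨g, hg⟩ := exists_ne (1 : G)
    obtain ⟨X, hX, hgX⟩ := A.cover g
    have h1X : 1 ∉ X := fun h1 => hg ((eq_singleton_one_of_one_mem hX h1).subset hgX)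
    exact eq_compl X hX h1X ▸ hX

end Group

section CommGroup

variable {G : Type*} [CommGroup G] [Fintype G] {A : SchurRing G} {X : Set G} {p : ℕ}
  [Fact p.Prime]

theorem isASet.setOf_not_dvd_ncard_pow_eq (hX : A.isASet X) :
    A.isASet {g | ¬ p ∣ {x ∈ X | x ^ p = g}.ncard} := by
  have : {g | ¬ p ∣ {x ∈ X | x ^ p = g}.ncard} =
      {g | (((clsum X ^ p).coeff g : ℤ) : ZMod p) ≠ 0} := by
    ext g
    simp [coeff_clsum_pow_prime, ZMod.natCast_eq_zero_iff]
  rw [this]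
  exact isASet_setOf_coeff (pow_mem (S := A.toSubalgebra) hX p) fun n => (n : ZMod p) ≠ 0

theorem IsPrimitive.dvd_ncard_pow_eq (hA : A.IsPrimitive)
    (hN : (powMonoidHom p : G →* G).ker ≠ ⊥) (hX : A.isASet X) {g : G} (hg : g ≠ 1) :
    p ∣ {x ∈ X | x ^ p = g}.ncard := by
  by_contra hndvd
  refine hg (hA.subset_singleton_one (hX.setOf_not_dvd_ncard_pow_eq (p := p))
    (range_powMonoidHom_ne_top hN) (fun k hk => ?_) hndvd)
  have : {x ∈ X | x ^ p = k}.Nonempty := by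
    by_contra hempty
    exact hk (by simp [Set.not_nonempty_iff_eq_empty.1 hempty])
  obtain ⟨x, -, hx⟩ := this
  exact ⟨x, hx⟩

theorem IsPrimitive.mul_mem_of_mem_sdiff_ker (hA : A.IsPrimitive)
    (hN : Nat.card (powMonoidHom p : G →* G).ker = p) (hX : A.isASet X) {h x : G}
    (hh : h ∈ (powMonoidHom p : G →* G).ker) (hx : x ∈ X \ (powMonoidHom p : G →* G).ker) :
    h * x ∈ X := by
  have hdvd : p ∣ {y ∈ X | y ^ p = x ^ p}.ncard :=
    hA.dvd_ncard_pow_eq (ker_powMonoidHom_ne_bot hN) hX hx.2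
  have hpos : 0 < {y ∈ X | y ^ p = x ^ p}.ncard := (Set.ncard_pos).2 ⟨x, hx.1, rfl⟩
  have roots_eq : {y ∈ X | y ^ p = x ^ p} = {y | y ^ p = x ^ p} := by
    refine Set.eq_of_subset_of_ncard_le (fun y hy => hy.2) ?_
    rw [ncard_setOf_pow_eq_pow, hN]
    exact Nat.le_of_dvd hpos hdvd
  have hhp : h ^ p = 1 := hh
  have : h * x ∈ {y ∈ X | y ^ p = x ^ p} := by
    rw [roots_eq, Set.mem_ofPred_eq, mul_pow, hhp, one_mul]
  exact this.1

theorem IsPrimitive.inter_ker_nonempty (hA : A.IsPrimitive)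
    (hN : Nat.card (powMonoidHom p : G →* G).ker = p) (hX : A.isASet X) (hne : X.Nonempty) :
    (X ∩ (powMonoidHom p : G →* G).ker).Nonempty := by
  by_contra hempty
  have notMem {x : G} (hx : x ∈ X) : x ∉ (powMonoidHom p : G →* G).ker :=
    fun hxN => hempty ⟨x, hx, hxN⟩
  have huniv : X ≠ Set.univ := fun h => notMem (h ▸ Set.mem_univ 1) (Subgroup.one_mem _)
  refine ker_powMonoidHom_ne_bot hN (le_bot_iff.1 ?_)
  rw [← hA.stabilizer_eq_bot hX hne huniv]
  intro h hh
  rw [MulAction.mem_stabilizer_set_iff_smul_set_subset X.toFinite]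
  rintro _ ⟨x, hx, rfl⟩
  exact hA.mul_mem_of_mem_sdiff_ker hN hX hh ⟨hx, notMem hx⟩

theorem IsPrimitive.ncard_sdiff_ker_le_ncard_inter_smul (hA : A.IsPrimitive)
    (hN : Nat.card (powMonoidHom p : G →* G).ker = p) (hX : A.isASet X) (g : G) :
    (X \ (powMonoidHom p : G →* G).ker).ncard ≤ (X ∩ g • X).ncard := by
  obtain ⟨Y, hY, hgY⟩ := A.cover g
  obtain ⟨h, hhY, hhN⟩ := hA.inter_ker_nonempty hN (isASet_of_mem hY) (A.nonempty_cls Y hY)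
  rw [hX.ncard_inter_smul_eq hY hgY hhY]
  refine Set.ncard_le_ncard fun x hx => ⟨hx.1, Set.mem_smul_set_iff_inv_smul_mem.2 ?_⟩
  exact hA.mul_mem_of_mem_sdiff_ker hN hX (Subgroup.inv_mem _ hhN) hx

theorem IsPrimitive.ncard_inter_ker_lt_ncard_sdiff_ker (hA : A.IsPrimitive)
    (hN : Nat.card (powMonoidHom p : G →* G).ker = p) (htop : (powMonoidHom p : G →* G).ker ≠ ⊤)
    (hX : A.isASet X) (hne : X.Nonempty) (h1 : 1 ∉ X) :
    (X ∩ (powMonoidHom p : G →* G).ker).ncard < (X \ (powMonoidHom p : G →* G).ker).ncard := by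
  have sdiff_nonempty : (X \ (powMonoidHom p : G →* G).ker).Nonempty := by
    refine Set.sdiff_nonempty.2 fun hsub => ?_
    obtain ⟨x, hx⟩ := hne
    exact h1 (hA.subset_singleton_one hX htop hsub hx ▸ hx)
  obtain ⟨x, hx⟩ := sdiff_nonempty
  set N : Set G := ((powMonoidHom p : G →* G).ker : Set G)
  calc (X ∩ N).ncard
    _ < N.ncard := by
      have one_mem_N : 1 ∈ N := Subgroup.one_mem _
      exact Set.ncard_lt_ncard ⟨Set.inter_subset_right, fun hsub => h1 (hsub one_mem_N).1⟩
    _ = ((· * x) '' N).ncard := (Set.ncard_image_of_injective N (mul_left_injective x)).symm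
    _ ≤ (X \ N).ncard := by
      refine Set.ncard_le_ncard ?_
      rintro _ ⟨h, hh, rfl⟩
      exact ⟨hA.mul_mem_of_mem_sdiff_ker hN hX hh hx,
        fun hhx => hx.2 ((Subgroup.mul_mem_cancel_left _ hh).1 hhx)⟩

theorem IsPrimitive.ncard_add_mul_ncard_sdiff_ker_le (hA : A.IsPrimitive)
    (hN : Nat.card (powMonoidHom p : G →* G).ker = p) (hX : A.isASet X) :
    X.ncard + (Fintype.card G - 1) * (X \ (powMonoidHom p : G →* G).ker).ncard ≤
      X.ncard * X.ncard := by
  classical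
  calc X.ncard + (Fintype.card G - 1) * (X \ (powMonoidHom p : G →* G).ker).ncard
    _ = (X ∩ (1 : G) • X).ncard +
        ∑ _g ∈ Finset.univ.erase (1 : G), (X \ (powMonoidHom p : G →* G).ker).ncard := by simp
    _ ≤ (X ∩ (1 : G) • X).ncard + ∑ g ∈ Finset.univ.erase (1 : G), (X ∩ g • X).ncard :=
      Nat.add_le_add_left
        (Finset.sum_le_sum fun g _ => hA.ncard_sdiff_ker_le_ncard_inter_smul hN hX g) _
    _ = X.ncard * X.ncard := by
      rw [Finset.add_sum_erase _ (fun g : G => (X ∩ g • X).ncard) (Finset.mem_univ 1),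
        sum_ncard_inter_smul]

theorem IsPrimitive.card_lt_two_mul_ncard (hA : A.IsPrimitive)
    (hN : Nat.card (powMonoidHom p : G →* G).ker = p) (htop : (powMonoidHom p : G →* G).ker ≠ ⊤)
    (hX : A.isASet X) (hne : X.Nonempty) (h1 : 1 ∉ X) : Fintype.card G < 2 * X.ncard := by
  have hlt := hA.ncard_inter_ker_lt_ncard_sdiff_ker hN htop hX hne h1
  have hsplit := Set.ncard_inter_add_ncard_sdiff_eq_ncard X (powMonoidHom p : G →* G).ker
  have hcount := hA.ncard_add_mul_ncard_sdiff_ker_le hN hX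
  obtain ⟨m, hm⟩ : ∃ m, Fintype.card G = m + 1 :=
    Nat.exists_eq_succ_of_ne_zero Fintype.card_ne_zero
  rw [hm, Nat.add_sub_cancel] at hcount
  by_contra! hge
  have hsmall : 2 * X.ncard ≤ m + 1 := hm ▸ hge
  have hlarge : X.ncard < 2 * (X \ (powMonoidHom p : G →* G).ker).ncard := by omega
  have hprod : 2 * X.ncard * (X.ncard + 1) ≤
      (m + 1) * (2 * (X \ (powMonoidHom p : G →* G).ker).ncard) :=
    Nat.mul_le_mul hsmall hlarge
  linarith only [hcount, hprod, hsplit, hlarge]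

theorem IsPrimitive.eq_of_one_notMem (hA : A.IsPrimitive)
    (hN : Nat.card (powMonoidHom p : G →* G).ker = p) (htop : (powMonoidHom p : G →* G).ker ≠ ⊤)
    {Y : Set G} (hX : X ∈ A.P) (hY : Y ∈ A.P) (h1X : 1 ∉ X) (h1Y : 1 ∉ Y) : X = Y := by
  by_contra hXY
  have hcard : X.ncard + Y.ncard ≤ Fintype.card G := by
    rw [← Set.ncard_union_eq (A.disj X hX Y hY hXY), ← Nat.card_eq_fintype_card]
    exact Set.ncard_le_card _
  have hXlarge :=
    hA.card_lt_two_mul_ncard hN htop (isASet_of_mem hX) (A.nonempty_cls X hX) h1X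
  have hYlarge :=
    hA.card_lt_two_mul_ncard hN htop (isASet_of_mem hY) (A.nonempty_cls Y hY) h1Y
  omega

end CommGroup

end SchurRing

/-- Wielandt: a primitive S-ring over an abelian group of composite order
with a cyclic Sylow subgroup has rank 2. -/
theorem stmt14 {G : Type*} [CommGroup G] [Fintype G]
    (hcomp : ∃ a b : ℕ, 1 < a ∧ 1 < b ∧ Fintype.card G = a * b)
    (hsyl : ∃ p : ℕ, p.Prime ∧ p ∣ Fintype.card G ∧ ∀ P : Sylow p G, IsCyclic ↥P)
    (A : SchurRing G)
    (hprim : ∀ L : Subgroup G, A.isASet (L : Set G) → L = ⊥ ∨ L = ⊤) :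
    A.P = {({1} : Set G), ({1}ᶜ : Set G)} := by
  obtain ⟨a, b, ha, hb, hab⟩ := hcomp
  obtain ⟨p, hp, hdvd, hcyc⟩ := hsyl
  have : Fact p.Prime := ⟨hp⟩
  have : IsCyclic ↥(default : Sylow p G) := hcyc default
  have : Nontrivial G :=
    Fintype.one_lt_card_iff_nontrivial.1 (hab ▸ Nat.one_lt_mul_iff.2 (by omega))
  have hN : Nat.card (powMonoidHom p : G →* G).ker = p :=
    card_ker_powMonoidHom_of_isCyclic_sylow (Nat.card_eq_fintype_card (α := G) ▸ hdvd) default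
  have htop : (powMonoidHom p : G →* G).ker ≠ ⊤ := by
    intro h
    rw [h, Subgroup.card_top, Nat.card_eq_fintype_card, hab] at hN
    exact Nat.not_prime_mul ha.ne' hb.ne' (hN ▸ hp)
  have hA : A.IsPrimitive := hprim
  exact SchurRing.P_eq_pair fun X hX Y hY => hA.eq_of_one_notMem hN htop hX hY
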